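/- Let ρ̂ : {−2B,…,2B} → ℂ and let V_opt ∈ ℂ^{Q×n} be the matrix all of whose Q rows are equal to v_opt. Then for every V ∈ ℂ^{Q×n}, ‖𝒯_ρ − BC(V_opt)‖_F² ≤ ‖𝒯_ρ − BC(V)‖_F², and the minimal value is ‖𝒯_ρ − BC(V_opt)‖_F² = Q²·S_B(ρ̂). -/

import Mathlib

/-!
The matrix `BC(V)` is constant, with value `V[q, d]`, on the positions whose block difference is
`q` modulo `Q` and whose frequency difference is `d` modulo `n = 2B+1`. On these `Q·n` positions
`𝒯_ρ` takes only two values: `ρ̂[d]`, at `Q(n-d)` of them, and `ρ̂[d-n]`, at the other `Q·d`.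
Thus each entry of `V` is fitted separately to two weighted points, and the best choice is their
weighted mean, which is `v_opt[d]`. Quantitatively (`weighted_two_point`), the parallel axis
identity gives

  `‖𝒯_ρ - BC(V)‖_F² = Q·n·∑ ‖V[q, d] - v_opt[d]‖² + Q²·S_B(ρ̂)`  (`frobSq_sub_BCmat`),

from which both the minimality and the minimal value are immediate.
-/

open Complex ComplexConjugate

/-- `v_opt[k] = (k·ρ̂[-(n-k)] + (n-k)·ρ̂[k]) / n`, `n = 2B+1`. -/
noncomputable def vopt (B : ℕ) (rhohat : ℤ → ℂ) : Fin (2 * B + 1) → ℂ :=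
  fun k => ((((k : ℕ) : ℤ) : ℂ) * rhohat (-((2 * B + 1 : ℤ) - ((k : ℕ) : ℤ))) +
      (((2 * B + 1 : ℤ) - ((k : ℕ) : ℤ) : ℤ) : ℂ) * rhohat ((k : ℕ) : ℤ)) /
    ((2 * B + 1 : ℕ) : ℂ)

/-- `S_B(ρ̂) = Σ_{k=1}^{n-1} |ρ̂[k] - ρ̂[-(n-k)]|² · k(n-k)/n`, `n = 2B+1`. -/
noncomputable def SB (B : ℕ) (rhohat : ℤ → ℂ) : ℝ :=
  ∑ k ∈ Finset.Icc (1 : ℤ) (2 * B : ℤ),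
    ‖rhohat k - rhohat (-((2 * B + 1 : ℤ) - k))‖ ^ 2 *
      ((k * ((2 * B + 1 : ℤ) - k) : ℤ) : ℝ) / ((2 * B + 1 : ℕ) : ℝ)

/-- The block matrix `𝒯_ρ[(k₁,q₁),(k₂,q₂)] = ρ̂[k₁ - k₂]`, with the `k`-index represented by
`i : Fin (2B+1)` via `k = i - B`, and the `q`-index by `Fin Q`. -/
noncomputable def Tmat2 (B Q : ℕ) (rhohat : ℤ → ℂ) :
    Matrix (Fin (2 * B + 1) × Fin Q) (Fin (2 * B + 1) × Fin Q) ℂ :=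
  Matrix.of fun p₁ p₂ => rhohat (((p₁.1 : ℕ) : ℤ) - ((p₂.1 : ℕ) : ℤ))

/-- The block-circulant matrix `BC(V)[(k₁,q₁),(k₂,q₂)] = V[(q₁-q₂) mod Q, (k₁-k₂) mod n]`. -/
noncomputable def BCmat (B Q : ℕ) (V : Matrix (Fin Q) (Fin (2 * B + 1)) ℂ) :
    Matrix (Fin (2 * B + 1) × Fin Q) (Fin (2 * B + 1) × Fin Q) ℂ :=
  Matrix.of fun p₁ p₂ => V (p₁.2 - p₂.2) (p₁.1 - p₂.1)

/-- The matrix `V_opt ∈ ℂ^{Q×n}`, all of whose `Q` rows equal `v_opt`. -/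
noncomputable def Vopt (B Q : ℕ) (rhohat : ℤ → ℂ) : Matrix (Fin Q) (Fin (2 * B + 1)) ℂ :=
  Matrix.of fun _ j => vopt B rhohat j

/-- The squared Frobenius norm of a complex matrix. -/
noncomputable def frobSq {m : Type*} [Fintype m] (A : Matrix m m ℂ) : ℝ :=
  ∑ i, ∑ j, ‖A i j‖ ^ 2

/-- Parallel axis identity for two points `a`, `b` with weights `n - d`, `d`. -/
lemma weighted_two_point (n d : ℝ) (hn : n ≠ 0) (a b v : ℂ) :
    (n - d) * ‖a - v‖ ^ 2 + d * ‖b - v‖ ^ 2 =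
      n * ‖v - ((d : ℂ) * b + ((n : ℂ) - (d : ℂ)) * a) / (n : ℂ)‖ ^ 2 +
        ‖a - b‖ ^ 2 * (d * (n - d)) / n := by
  have hre : (((d : ℂ) * b + ((n : ℂ) - (d : ℂ)) * a) / (n : ℂ)).re =
      (d * b.re + (n - d) * a.re) / n := by
    rw [Complex.div_ofReal_re]; simp
  have him : (((d : ℂ) * b + ((n : ℂ) - (d : ℂ)) * a) / (n : ℂ)).im =
      (d * b.im + (n - d) * a.im) / n := by
    rw [Complex.div_ofReal_im]; simp
  simp only [Complex.sq_norm, Complex.normSq_apply, Complex.sub_re, Complex.sub_im, hre, him]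
  field_simp
  ring

/-- A sum over the cyclic diagonal `i - j = d` of an `n × n` array of a function of the integer
difference `i - j`: the diagonal has `n - d` entries with difference `d` and `d` entries with
difference `d - n`. -/
lemma sum_cyclic_diagonal (m : ℕ) (d : Fin (m + 1)) (f : ℤ → ℝ) :
    ∑ j : Fin (m + 1), f ((((d + j : Fin (m + 1)) : ℕ) : ℤ) - ((j : ℕ) : ℤ)) =
      (((m + 1 : ℕ) : ℝ) - ((d : ℕ) : ℝ)) * f ((d : ℕ) : ℤ) +
        ((d : ℕ) : ℝ) * f (((d : ℕ) : ℤ) - ((m + 1 : ℕ) : ℤ)) := by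
  have hd := d.isLt
  have h : ∀ j : Fin (m + 1), f ((((d + j : Fin (m + 1)) : ℕ) : ℤ) - ((j : ℕ) : ℤ)) =
      (fun t : ℕ => if t < m + 1 - (d : ℕ) then f ((d : ℕ) : ℤ)
        else f (((d : ℕ) : ℤ) - ((m + 1 : ℕ) : ℤ))) (j : ℕ) := by
    intro j
    have hj := j.isLt
    rw [Fin.val_add_eq_ite]
    dsimp only
    split_ifs with h1 h2 h2
    · omega
    · congr 1
      omega
    · congr 1
      omega
    · omega
  rw [Finset.sum_congr rfl fun j _ => h j, Fin.sum_univ_eq_sum_range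
    (fun t : ℕ => if t < m + 1 - (d : ℕ) then f ((d : ℕ) : ℤ)
        else f (((d : ℕ) : ℤ) - ((m + 1 : ℕ) : ℤ))) (m + 1)]
  have hsplit : m + 1 = (m + 1 - (d : ℕ)) + (d : ℕ) := by omega
  rw [congrArg Finset.range hsplit, Finset.sum_range_add]
  congr 1
  · rw [Finset.sum_congr rfl (g := fun _ => f ((d : ℕ) : ℤ))]
    · rw [Finset.sum_const, Finset.card_range, nsmul_eq_mul, Nat.cast_sub hd.le]
    · intro t ht
      rw [Finset.mem_range] at ht
      rw [if_pos (by omega)]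
  · rw [Finset.sum_congr rfl (g := fun _ => f (((d : ℕ) : ℤ) - ((m + 1 : ℕ) : ℤ)))]
    · rw [Finset.sum_const, Finset.card_range, nsmul_eq_mul]
    · intro t _
      rw [if_neg (by omega)]

/-- `S_B` as a sum over all of `Fin (2B+1)`; the term at `0` vanishes. -/
lemma SB_eq_sum_fin (B : ℕ) (rhohat : ℤ → ℂ) :
    SB B rhohat = ∑ d : Fin (2 * B + 1),
      ‖rhohat ((d : ℕ) : ℤ) - rhohat (((d : ℕ) : ℤ) - ((2 * B + 1 : ℕ) : ℤ))‖ ^ 2 *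
        (((d : ℕ) : ℝ) * (((2 * B + 1 : ℕ) : ℝ) - ((d : ℕ) : ℝ))) / ((2 * B + 1 : ℕ) : ℝ) := by
  rw [Fin.sum_univ_succ]
  simp only [Fin.val_zero, Nat.cast_zero, zero_mul, mul_zero, zero_div, zero_add, Fin.val_succ]
  unfold SB
  symm
  refine Finset.sum_bij (fun (i : Fin (2 * B)) _ => (((i : ℕ) + 1 : ℕ) : ℤ)) ?_ ?_ ?_ ?_
  · intro i _
    have := i.isLt
    rw [Finset.mem_Icc]
    omega
  · intro i _ j _ h
    ext
    omega
  · intro k hk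
    rw [Finset.mem_Icc] at hk
    exact ⟨⟨(k - 1).toNat, by omega⟩, Finset.mem_univ _, by simp only []; omega⟩
  · intro i _
    have h : -((2 * B + 1 : ℤ) - (((i : ℕ) + 1 : ℕ) : ℤ)) =
        (((i : ℕ) + 1 : ℕ) : ℤ) - ((2 * B + 1 : ℕ) : ℤ) := by
      push_cast
      ring
    rw [h]
    push_cast
    ring

/-- Grouping the entries of `𝒯_ρ - BC(V)` along the cyclic diagonals of both index pairs. -/
lemma frobSq_eq_sum_diagonals (B Q : ℕ) (hQ : 1 ≤ Q) (rhohat : ℤ → ℂ)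
    (V : Matrix (Fin Q) (Fin (2 * B + 1)) ℂ) :
    frobSq (Tmat2 B Q rhohat - BCmat B Q V) =
      Q * ∑ q : Fin Q, ∑ d : Fin (2 * B + 1),
        ((((2 * B + 1 : ℕ) : ℝ) - ((d : ℕ) : ℝ)) * ‖rhohat ((d : ℕ) : ℤ) - V q d‖ ^ 2 +
          ((d : ℕ) : ℝ) *
            ‖rhohat (((d : ℕ) : ℤ) - ((2 * B + 1 : ℕ) : ℤ)) - V q d‖ ^ 2) := by
  have : NeZero Q := ⟨by omega⟩
  unfold frobSq
  rw [Finset.sum_comm]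
  -- With the column index `p` fixed, the row index is written as `(d, q) + p`.
  have hrow : ∀ p : Fin (2 * B + 1) × Fin Q,
      ∑ r, ‖(Tmat2 B Q rhohat - BCmat B Q V) r p‖ ^ 2 =
        ∑ s : Fin (2 * B + 1) × Fin Q,
          ‖rhohat ((((s.1 + p.1 : Fin (2 * B + 1)) : ℕ) : ℤ) - ((p.1 : ℕ) : ℤ)) -
            V s.2 s.1‖ ^ 2 := by
    intro p
    rw [← Equiv.sum_comp (Equiv.addRight p)]
    refine Finset.sum_congr rfl fun s _ => ?_
    simp [Tmat2, BCmat]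
  rw [Finset.sum_congr rfl fun p _ => hrow p, Finset.sum_comm, Fintype.sum_prod_type_right,
    Finset.mul_sum]
  refine Finset.sum_congr rfl fun q _ => ?_
  rw [Finset.mul_sum]
  refine Finset.sum_congr rfl fun d _ => ?_
  rw [Fintype.sum_prod_type_right]
  dsimp only
  rw [Finset.sum_const, Finset.card_univ, Fintype.card_fin, nsmul_eq_mul,
    sum_cyclic_diagonal (2 * B) d fun t => ‖rhohat t - V q d‖ ^ 2]

/-- The squared distance to `BC(V)` is the minimal value plus the weighted squared distance of `V`
from `V_opt`. -/
lemma frobSq_sub_BCmat (B Q : ℕ) (hQ : 1 ≤ Q) (rhohat : ℤ → ℂ)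
    (V : Matrix (Fin Q) (Fin (2 * B + 1)) ℂ) :
    frobSq (Tmat2 B Q rhohat - BCmat B Q V) =
      Q * (2 * B + 1 : ℕ) * ∑ q : Fin Q, ∑ d : Fin (2 * B + 1), ‖V q d - vopt B rhohat d‖ ^ 2 +
        (Q : ℝ) ^ 2 * SB B rhohat := by
  have hn : ((2 * B + 1 : ℕ) : ℝ) ≠ 0 := by positivity
  have hv : ∀ d : Fin (2 * B + 1), vopt B rhohat d =
      (((((d : ℕ) : ℝ) : ℂ)) * rhohat (((d : ℕ) : ℤ) - ((2 * B + 1 : ℕ) : ℤ)) +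
        ((((2 * B + 1 : ℕ) : ℝ) : ℂ) - (((d : ℕ) : ℝ) : ℂ)) * rhohat ((d : ℕ) : ℤ)) /
        (((2 * B + 1 : ℕ) : ℝ) : ℂ) := by
    intro d
    have h : -((2 * B + 1 : ℤ) - ((d : ℕ) : ℤ)) =
        ((d : ℕ) : ℤ) - ((2 * B + 1 : ℕ) : ℤ) := by
      push_cast
      ring
    unfold vopt
    rw [h]
    push_cast
    rfl
  rw [frobSq_eq_sum_diagonals B Q hQ]
  simp only [weighted_two_point _ _ hn, ← hv, Finset.sum_add_distrib, ← SB_eq_sum_fin,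
    ← Finset.mul_sum, Finset.sum_const, Finset.card_univ, Fintype.card_fin, nsmul_eq_mul]
  ring

/-- `BC(V_opt)` is the closest block-circulant matrix to `𝒯_ρ` in the
Frobenius norm, and the minimal squared distance equals `Q²·S_B(ρ̂)`. -/
theorem stmt_10 (B Q : ℕ) (hB : 1 ≤ B) (hQ : 1 ≤ Q) (rhohat : ℤ → ℂ) :
    (∀ V : Matrix (Fin Q) (Fin (2 * B + 1)) ℂ,
      frobSq (Tmat2 B Q rhohat - BCmat B Q (Vopt B Q rhohat)) ≤
        frobSq (Tmat2 B Q rhohat - BCmat B Q V)) ∧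
    frobSq (Tmat2 B Q rhohat - BCmat B Q (Vopt B Q rhohat)) = (Q : ℝ) ^ 2 * SB B rhohat := by
  have hopt : frobSq (Tmat2 B Q rhohat - BCmat B Q (Vopt B Q rhohat)) =
      (Q : ℝ) ^ 2 * SB B rhohat := by
    rw [frobSq_sub_BCmat B Q hQ]
    simp [Vopt]
  refine ⟨fun V => ?_, hopt⟩
  rw [hopt, frobSq_sub_BCmat B Q hQ]
  exact le_add_of_nonneg_left (by positivity)
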